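/- Let G_t and H be proper lower semicontinuous convex functions such that the set ⋃_{α>0} α·dom φ is a nonempty closed linear subspace of C. Then the infimum of Σ_{t=0}^T G_t*(λ_t) + H*(λ) over λ ∈ C* is attained, its value equals the negative of the infimum of problem (P), and x ∈ ∏_t C_t solves (P) if and only if there exists λ ∈ C* such that λ_t ∈ ∂G_t(x_t) for every t = 0,…,T and λ ∈ ∂H(−Σ_{t=0}^T x_t∘π_t); any such λ attains the infimum of the relaxed dual problem. -/

import Mathlib

/-!
The perturbation `F(x, u) = ∑ G_t(x_t) + H(u - ∑ x_t ∘ π_t)` is convex and lower semicontinuous on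
the Banach space `∏ C_t × C`, and `φ` is its partial infimum over `x`. Everything follows once `φ`
is known to have a subgradient at `0` whenever `φ 0` is finite.

The subgradient exists by the Attouch–Brezis argument, carried out in the closed subspace `U`
generated by `dom φ`, which is a Banach space. The set `D` of those `u ∈ U` with `F(x, u) ≤ c` for
some `x` in a fixed ball is convex and absorbing, so by Baire's theorem the closure of `D` is a
neighbourhood of `0` (`exists_ball_subset_snd_image`). Although `D` need not be closed, it is the
projection of a closed convex set that is bounded in the complete direction `x`, so a dyadic series
argument removes the closure (`ball_subset_snd_image`). Hence `φ` is bounded above near `0` in `U`,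
its epigraph has interior points, and separating `(0, φ 0)` from that interior and extending to
`C` by Hahn–Banach gives the subgradient (`exists_subgradient`).

A functional `λ` with `φ 0 + λ ≤ φ` satisfies `∑ G_t*(λ_t) + H*(λ) ≤ -φ 0`, and weak duality is the
reverse inequality. If `φ 0 = ⊥`, weak duality makes the dual objective identically `⊤`. The
subdifferential conditions at `x` hold for `λ` exactly when `x` solves (P) and `λ` is a subgradient
of `φ` at `0` (`kkt_of_minorizes`, `minorizes_of_kkt`).
-/


open MeasureTheory Filter Set
open scoped ENNReal

noncomputable section

/-- The positive part of an extended real number, as an extended nonnegative real. -/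
def EReal.posPart' (x : EReal) : ℝ≥0∞ := if x = ⊤ then ⊤ else ENNReal.ofReal x.toReal

/-- Integral of an `EReal`-valued function, with the convention that the value is `⊤`
whenever the positive part fails to be integrable. -/
def eInt {X : Type*} [MeasurableSpace X] (μ : Measure X) (f : X → EReal) : EReal :=
  if (∫⁻ s, (f s).posPart' ∂μ) = ⊤ then ⊤
  else ((∫⁻ s, (f s).posPart' ∂μ : ℝ≥0∞) : EReal) -
    ((∫⁻ s, (-(f s)).posPart' ∂μ : ℝ≥0∞) : EReal)

/-- Integral of a real function against a finite signed measure, via the Jordan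
decomposition. -/
def sInt {X : Type*} [MeasurableSpace X] (m : SignedMeasure X) (f : X → ℝ) : ℝ :=
  ∫ s, f s ∂m.toJordanDecomposition.posPart - ∫ s, f s ∂m.toJordanDecomposition.negPart

/-- Convexity of an extended-real-valued function on a real vector space. -/
def EConvexOn {E : Type*} [AddCommGroup E] [Module ℝ E] (k : E → EReal) : Prop :=
  ∀ x y : E, ∀ a b : ℝ, 0 ≤ a → 0 ≤ b → a + b = 1 →
    k (a • x + b • y) ≤ (a : EReal) * k x + (b : EReal) * k y

/-- Properness of an extended-real-valued function: it is nowhere `−∞` and somewhere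
finite. -/
def EProper {E : Type*} (k : E → EReal) : Prop := (∃ x, k x ≠ ⊤) ∧ ∀ x, k x ≠ ⊥

/-- The recession function `k^∞` of a (convex lsc) function `k`:
`k^∞(x) = sup_{α>0} (k(x̄ + αx) − k(x̄))/α`, the supremum being taken also over all
points `x̄` of the domain of `k` (for convex lsc `k` it does not depend on `x̄`). -/
def erec {E : Type*} [AddCommGroup E] [Module ℝ E] (k : E → EReal) (x : E) : EReal :=
  ⨆ (y : E) (_ : k y < ⊤) (a : ℝ) (_ : 0 < a),
    (((a⁻¹ : ℝ)) : EReal) * (k (y + a • x) - k y)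

/-- The l.s.c. hull of the domain membership:  here simply the closure of the domain. -/
def edom {E : Type*} [TopologicalSpace E] (k : E → EReal) : Set E := closure {x | k x < ⊤}

/-- `v` belongs to the subdifferential `∂k(x)` (w.r.t. the euclidean pairing). -/
def ESubdiffAt {ι : Type*} [Fintype ι] (k : (ι → ℝ) → EReal) (x v : ι → ℝ) : Prop :=
  ∀ y : ι → ℝ, k x + ((∑ i, v i * (y i - x i) : ℝ) : EReal) ≤ k y

/-- `v` belongs to the normal cone `N_D(x)` of `D` at `x`. -/
def InNormalCone {ι : Type*} [Fintype ι] (D : Set (ι → ℝ)) (x v : ι → ℝ) : Prop :=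
  x ∈ D ∧ ∀ y ∈ D, (∑ i, v i * (y i - x i)) ≤ 0

/-- A property of points of `S = ∏ t, S t` holds `(μ_t)`-almost everywhere if it holds on
a Cartesian product of sets of full measure. -/
def ProdAE {T : ℕ} {S : Fin (T + 1) → Type*} [∀ t, MeasurableSpace (S t)]
    (μt : ∀ t, Measure (S t)) (P : (∀ t, S t) → Prop) : Prop :=
  ∃ A : ∀ t, Set (S t), (∀ t, MeasurableSet (A t) ∧ μt t (A t) = 1) ∧
    ∀ s ∈ Set.univ.pi A, P s

/-- A set-valued mapping `D : S ⇉ ℝ^d` is inner semicontinuous if the preimage of every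
open set is open. -/
def InnerSemicontinuous {X E : Type*} [TopologicalSpace X] [TopologicalSpace E]
    (D : X → Set E) : Prop :=
  ∀ O : Set E, IsOpen O → IsOpen {x | (D x ∩ O).Nonempty}

end

noncomputable section Weighted

open MeasureTheory Filter Set BoundedContinuousFunction

variable {T d : ℕ} {S : Fin (T + 1) → Type*} [∀ t, TopologicalSpace (S t)]

/-- The weight `ψ(s) = ∑_t ψ_t(s_t)` on the product space. -/
def psiS (ψt : ∀ t, S t → ℝ) (s : ∀ t, S t) : ℝ := ∑ t, ψt t (s t)

lemma psiS_pos (ψt : ∀ t, S t → ℝ) (hψ1 : ∀ t st, 1 ≤ ψt t st) (s : ∀ t, S t) :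
    0 < psiS ψt s := by
  have h : (1 : ℝ) ≤ psiS ψt s :=
    le_trans (hψ1 0 (s 0))
      (Finset.single_le_sum (f := fun t => ψt t (s t))
        (fun r _ => le_trans zero_le_one (hψ1 r (s r))) (Finset.mem_univ 0))
  linarith

lemma psiS_cont (ψt : ∀ t, S t → ℝ) (hψc : ∀ t, Continuous (ψt t)) :
    Continuous (psiS ψt) :=
  continuous_finset_sum _ (fun t _ => (hψc t).comp (continuous_apply t))

/-- The canonical embedding `C_t → C`, `x_t ↦ x_t ∘ π_t`, in the normalized
representation in which an element `x` of the weighted space `C_t` is represented by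
the bounded continuous function `x/ψ_t` (so an element `u` of `C` represents the
function `s ↦ ψ(s) • u(s)`). -/
def embedT (ψt : ∀ t, S t → ℝ) (hψc : ∀ t, Continuous (ψt t))
    (hψ1 : ∀ t st, 1 ≤ ψt t st) (t : Fin (T + 1)) (x : S t →ᵇ (Fin d → ℝ)) :
    (∀ r, S r) →ᵇ (Fin d → ℝ) :=
  BoundedContinuousFunction.ofNormedAddCommGroup
    (fun s => (ψt t (s t) / psiS ψt s) • x (s t))
    (by
      have h1 : Continuous fun s : ∀ r, S r => ψt t (s t) := (hψc t).comp (continuous_apply t)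
      have h2 : Continuous (psiS ψt) := psiS_cont ψt hψc
      have h3 : Continuous fun s : ∀ r, S r => x (s t) := x.continuous.comp (continuous_apply t)
      exact (h1.div h2 fun s => (psiS_pos ψt hψ1 s).ne').smul h3)
    ‖x‖
    (by
      intro s
      have hpos := psiS_pos ψt hψ1 s
      have hle : ψt t (s t) / psiS ψt s ≤ 1 := by
        rw [div_le_one hpos]
        exact Finset.single_le_sum (f := fun r => ψt r (s r))
          (fun r _ => le_trans zero_le_one (hψ1 r (s r))) (Finset.mem_univ t)
      have h0 : 0 ≤ ψt t (s t) / psiS ψt s :=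
        div_nonneg (le_trans zero_le_one (hψ1 t (s t))) hpos.le
      calc ‖(ψt t (s t) / psiS ψt s) • x (s t)‖
          = |ψt t (s t) / psiS ψt s| * ‖x (s t)‖ := by
            rw [norm_smul, Real.norm_eq_abs]
        _ ≤ 1 * ‖x‖ := by
            apply mul_le_mul (by rwa [abs_of_nonneg h0]) (x.norm_coe_le_norm _)
              (norm_nonneg _) zero_le_one
        _ = ‖x‖ := one_mul _)

end Weighted

/-! ### Baire category and subgradients of the value function -/

section Duality

variable {X E : Type*} [NormedAddCommGroup X] [NormedSpace ℝ X]
  [NormedAddCommGroup E] [NormedSpace ℝ E]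

/-- If the projection of a closed convex set `K ⊆ X × E` to the complete space `X` is bounded, and a
ball around `0` lies in the closure of its projection to `E`, then the ball of half the radius lies
in the projection itself. The point `u` is expanded as `∑ 2^{-(k+1)} p_k` with `p_k` in the
projection, and the `X`-components of the lifts to `K` form an absolutely convergent series. -/
lemma ball_subset_snd_image [CompleteSpace X] {K : Set (X × E)} (hK : Convex ℝ K)
    (hc : IsClosed K) {r : ℝ} (hr : ∀ q ∈ K, ‖q.1‖ ≤ r) {δ : ℝ} (hδ : 0 < δ)
    (h : Metric.ball (0 : E) δ ⊆ closure (Prod.snd '' K)) :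
    Metric.ball (0 : E) (δ / 2) ⊆ Prod.snd '' K := by
  intro u hu
  have step : ∀ v : Metric.ball (0 : E) (δ / 2), ∃ q ∈ K, ‖(2 : ℝ) • (v : E) - q.2‖ < δ / 2 := by
    rintro ⟨v, hv⟩
    have h2 : (2 : ℝ) • v ∈ closure (Prod.snd '' K) := by
      apply h
      rw [mem_ball_zero_iff] at hv ⊢
      rw [norm_smul]
      norm_num
      linarith
    obtain ⟨_, ⟨q, hq, rfl⟩, hd⟩ := Metric.mem_closure_iff.1 h2 (δ / 2) (by positivity)
    exact ⟨q, hq, by rwa [dist_eq_norm] at hd⟩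
  choose g hgK hg using step
  let next : Metric.ball (0 : E) (δ / 2) → Metric.ball (0 : E) (δ / 2) := fun w =>
    ⟨(2 : ℝ) • (w : E) - (g w).2, by rw [mem_ball_zero_iff]; exact hg w⟩
  let v : ℕ → Metric.ball (0 : E) (δ / 2) := fun n => next^[n] ⟨u, hu⟩
  have hv0 : (v 0 : E) = u := rfl
  have hvs : ∀ n, (v (n + 1) : E) = (2 : ℝ) • (v n : E) - (g (v n)).2 := fun n => by
    simp only [v, Function.iterate_succ_apply']
    rfl
  have hmem : ∀ n : ℕ, ∀ q ∈ K,
      ∑ k ∈ Finset.range n, ((1 / 2 : ℝ) ^ (k + 1)) • g (v k) + ((1 / 2 : ℝ) ^ n) • q ∈ K := by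
    intro n
    induction n with
    | zero => intro q hq; simpa using hq
    | succ n ih =>
      intro q hq
      have := ih ((1 / 2 : ℝ) • g (v n) + (1 / 2 : ℝ) • q)
        (hK (hgK _) hq (by norm_num) (by norm_num) (by norm_num))
      rw [Finset.sum_range_succ, add_assoc]
      rw [smul_add, smul_smul, smul_smul, ← pow_succ] at this
      exact this
  have hsnd : ∀ n : ℕ, ∑ k ∈ Finset.range n, ((1 / 2 : ℝ) ^ (k + 1)) • (g (v k)).2
      = u - ((1 / 2 : ℝ) ^ n) • (v n : E) := by
    intro n
    induction n with
    | zero => simp [hv0]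
    | succ n ih =>
      rw [Finset.sum_range_succ, ih, hvs, smul_sub, smul_smul, pow_succ]
      have : (1 / 2 : ℝ) ^ n * (1 / 2) * 2 = (1 / 2) ^ n := by ring
      rw [this]
      abel
  have hpow : Filter.Tendsto (fun n : ℕ => (1 / 2 : ℝ) ^ n) Filter.atTop (nhds 0) :=
    tendsto_pow_atTop_nhds_zero_of_lt_one (by norm_num) (by norm_num)
  have hsum : Summable fun k : ℕ => ((1 / 2 : ℝ) ^ (k + 1)) • (g (v k)).1 := by
    have hs : Summable fun k : ℕ => (1 / 2 : ℝ) ^ (k + 1) * r := by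
      refine Summable.mul_right r ?_
      exact (summable_nat_add_iff 1).2 summable_geometric_two
    refine Summable.of_norm_bounded hs fun k => ?_
    rw [norm_smul, Real.norm_of_nonneg (by positivity)]
    exact mul_le_mul_of_nonneg_left (hr _ (hgK _)) (by positivity)
  have h1 := hsum.hasSum.tendsto_sum_nat
  have h2 : Filter.Tendsto
      (fun n : ℕ => ∑ k ∈ Finset.range n, ((1 / 2 : ℝ) ^ (k + 1)) • (g (v k)).2)
      Filter.atTop (nhds u) := by
    simp_rw [hsnd]
    have hz : Filter.Tendsto (fun n : ℕ => ((1 / 2 : ℝ) ^ n) • (v n : E))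
        Filter.atTop (nhds 0) := by
      have hb : Filter.Tendsto (fun n : ℕ => (1 / 2 : ℝ) ^ n * (δ / 2))
          Filter.atTop (nhds 0) := by simpa using hpow.mul_const (δ / 2)
      refine squeeze_zero_norm (fun n => ?_) hb
      rw [norm_smul, Real.norm_of_nonneg (by positivity)]
      have : ‖(v n : E)‖ < δ / 2 := mem_ball_zero_iff.1 (v n).2
      exact mul_le_mul_of_nonneg_left this.le (by positivity)
    simpa using tendsto_const_nhds.sub hz
  have h3 : Filter.Tendsto (fun n : ℕ => ((1 / 2 : ℝ) ^ n) • g (v 0))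
      Filter.atTop (nhds 0) := by
    simpa using hpow.smul_const (g (v 0))
  have h4 := (h1.prodMk_nhds h2).add h3
  refine ⟨_, hc.mem_of_tendsto h4 (Filter.Eventually.of_forall fun n => ?_), by simp⟩
  convert hmem n (g (v 0)) (hgK _) using 2
  ext <;> simp [Prod.fst_sum, Prod.snd_sum]

/-- If moreover `E` is complete and the projection of `K` to `E` is absorbing, then this projection
is a neighbourhood of `0`: by the Baire category theorem its closure is one. -/
lemma exists_ball_subset_snd_image [CompleteSpace X] [CompleteSpace E] {K : Set (X × E)}
    (hK : Convex ℝ K) (hc : IsClosed K) {r : ℝ} (hr : ∀ q ∈ K, ‖q.1‖ ≤ r)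
    (habs : ∀ u : E, ∃ s : ℝ, 0 < s ∧ s • u ∈ Prod.snd '' K) :
    ∃ ε : ℝ, 0 < ε ∧ Metric.ball (0 : E) ε ⊆ Prod.snd '' K := by
  set D : Set E := Prod.snd '' K with hD
  have hDc : Convex ℝ D := by
    have := hK.linear_image (LinearMap.snd ℝ X E)
    simpa [hD] using this
  have h0 : (0 : E) ∈ D := by
    obtain ⟨s, -, hs⟩ := habs 0
    simpa using hs
  have hpos : ∀ n : ℕ, ((n : ℝ) + 1)⁻¹ ≠ 0 := fun n => by positivity
  obtain ⟨n, hn⟩ := nonempty_interior_of_iUnion_of_closed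
    (f := fun n : ℕ => (fun u : E => ((n : ℝ) + 1)⁻¹ • u) ⁻¹' closure D)
    (fun n => isClosed_closure.preimage (continuous_const_smul _))
    (by
      refine Set.eq_univ_of_forall fun u => Set.mem_iUnion.2 ?_
      obtain ⟨s, hs, hsu⟩ := habs u
      obtain ⟨n, hn⟩ := exists_nat_one_div_lt hs
      refine ⟨n, subset_closure ?_⟩
      have hle : ((n : ℝ) + 1)⁻¹ / s ≤ 1 := by
        rw [div_le_one hs]; simpa using hn.le
      have := hDc.smul_mem_of_zero_mem h0 hsu (t := ((n : ℝ) + 1)⁻¹ / s)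
        ⟨by positivity, hle⟩
      rwa [smul_smul, div_mul_cancel₀ _ hs.ne'] at this)
  have hint : (interior (closure D)).Nonempty := by
    obtain ⟨u, hu⟩ := hn
    have := (Homeomorph.smulOfNeZero (α := E) _ (hpos n)).preimage_interior (closure D)
    have hu' : u ∈ interior ((Homeomorph.smulOfNeZero (α := E) _ (hpos n)) ⁻¹' closure D) := hu
    rw [← this] at hu'
    exact ⟨_, hu'⟩
  have h0i : (0 : E) ∈ interior (closure D) := by
    obtain ⟨y, hy⟩ := hint
    obtain ⟨s, hs, hsy⟩ := habs (-y)
    have := hDc.closure.combo_interior_closure_mem_interior hy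
      (subset_closure (subset_closure hsy)) (a := s / (1 + s)) (b := 1 / (1 + s))
      (by positivity) (by positivity) (by field_simp; ring)
    convert this using 1
    rw [smul_smul, smul_neg, one_div, div_eq_inv_mul, add_neg_cancel]
  obtain ⟨δ, hδ, hb⟩ := Metric.mem_nhds_iff.1 (mem_interior_iff_mem_nhds.1 h0i)
  exact ⟨δ / 2, by positivity, ball_subset_snd_image hK hc hr hδ hb⟩

/-- An extended-real convex function satisfies Jensen's inequality for real upper bounds. -/
lemma EConvexOn.le_of_le {V : Type*} [AddCommGroup V] [Module ℝ V] {F : V → EReal}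
    (hF : EConvexOn F) {x y : V} {s t a b : ℝ} (hx : F x ≤ s) (hy : F y ≤ t)
    (ha : 0 ≤ a) (hb : 0 ≤ b) (hab : a + b = 1) :
    F (a • x + b • y) ≤ ((a * s + b * t : ℝ) : EReal) := by
  refine (hF x y a b ha hb hab).trans ?_
  push_cast
  exact add_le_add (mul_le_mul_of_nonneg_left hx (by exact_mod_cast ha))
    (mul_le_mul_of_nonneg_left hy (by exact_mod_cast hb))

/-- Attouch–Brezis: let `F` be convex and lower semicontinuous on a product of Banach spaces,
with value function `φ u = inf_x F (x, u)`. If the cone generated by `dom φ` is a closed subspace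
`p` and `m ≤ φ 0`, then `m + λ ≤ φ` for some continuous linear functional `λ`. -/
lemma exists_subgradient [CompleteSpace X] [CompleteSpace E] {F : X × E → EReal}
    (hF : EConvexOn F) (hlsc : LowerSemicontinuous F) (hbot : ∀ q, F q ≠ ⊥)
    (p : Submodule ℝ E) (hpc : IsClosed (p : Set E))
    (hdom : ∀ x u, F (x, u) ≠ ⊤ → u ∈ p)
    (habs : ∀ u ∈ p, ∃ s : ℝ, 0 < s ∧ ∃ x, F (x, s • u) ≠ ⊤)
    (m : ℝ) (hm : ∀ x, (m : EReal) ≤ F (x, 0)) :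
    ∃ lam : E →L[ℝ] ℝ, ∀ x u, (m : EReal) + (lam u : ℝ) ≤ F (x, u) := by
  have : CompleteSpace p := hpc.completeSpace_coe
  obtain ⟨x₀, hx₀⟩ : ∃ x, F (x, 0) ≠ ⊤ := by
    obtain ⟨s, -, x, hx⟩ := habs 0 p.zero_mem
    exact ⟨x, by simpa using hx⟩
  obtain ⟨c₀, hc₀⟩ : ∃ c₀ : ℝ, F (x₀, 0) = c₀ :=
    ⟨_, (EReal.coe_toReal hx₀ (hbot _)).symm⟩
  set c : ℝ := c₀ + 1
  set r : ℝ := ‖x₀‖ + 1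
  let K : Set (X × p) := {q | F (q.1, (q.2 : E)) ≤ c ∧ ‖q.1‖ ≤ r}
  have hKconv : Convex ℝ K := by
    rintro ⟨x, u⟩ ⟨h1, h2⟩ ⟨y, w⟩ ⟨h3, h4⟩ a b ha hb hab
    refine ⟨?_, ?_⟩
    · have := hF.le_of_le h1 h3 ha hb hab
      rw [← add_mul, hab, one_mul] at this
      exact this
    · exact ((convexOn_norm convex_univ).2 trivial trivial ha hb hab).trans (by
        simp only [smul_eq_mul] at *
        calc a * ‖x‖ + b * ‖y‖ ≤ a * r + b * r := by gcongr
          _ = r := by rw [← add_mul, hab, one_mul])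
  have hKcl : IsClosed K := by
    refine IsClosed.inter ?_ (isClosed_le (continuous_norm.comp continuous_fst) continuous_const)
    have hcont : Continuous fun q : X × p => (q.1, (q.2 : E)) := by fun_prop
    exact (hlsc.isClosed_preimage (c : EReal)).preimage hcont
  obtain ⟨ε, hε, hball⟩ := exists_ball_subset_snd_image hKconv hKcl (fun q hq => hq.2)
    (by
      intro u
      obtain ⟨s, hs, x, hx⟩ := habs u u.2
      obtain ⟨t, ht⟩ : ∃ t : ℝ, F (x, s • (u : E)) = t :=
        ⟨_, (EReal.coe_toReal hx (hbot _)).symm⟩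
      -- a small step `b` from `(x₀, 0)` towards `(x, s • u)` stays in `K`
      set M : ℝ := 1 + |t - c₀| + ‖x - x₀‖ with hM
      have hM1 : 1 ≤ M := by have := abs_nonneg (t - c₀); have := norm_nonneg (x - x₀); linarith
      set b : ℝ := 1 / M with hb
      have hb0 : 0 < b := by positivity
      have hb1 : b ≤ 1 := by rw [hb, div_le_one (by linarith)]; exact hM1
      have hbM : b * M = 1 := by rw [hb]; field_simp
      refine ⟨b * s, by positivity, ⟨((1 - b) • x₀ + b • x, (b * s) • u), ⟨?_, ?_⟩, rfl⟩⟩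
      · have := hF.le_of_le hc₀.le ht.le (a := 1 - b) (b := b) (by linarith) hb0.le (by ring)
        simp only [Prod.smul_mk, smul_zero, Prod.mk_add_mk, zero_add, smul_smul] at this
        refine this.trans ?_
        rw [EReal.coe_le_coe_iff]
        have h1 : t - c₀ ≤ M := by
          have := le_abs_self (t - c₀); have := norm_nonneg (x - x₀); linarith
        have := mul_le_mul_of_nonneg_left h1 hb0.le
        simp only [c]; linarith
      · have h1 : ‖x - x₀‖ ≤ M := by have := abs_nonneg (t - c₀); linarith
        have h2 := mul_le_mul_of_nonneg_left h1 hb0.le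
        have : (1 - b) • x₀ + b • x = x₀ + b • (x - x₀) := by module
        simp only [this]
        refine (norm_add_le _ _).trans ?_
        rw [norm_smul, Real.norm_of_nonneg hb0.le]
        simp only [r]; linarith)
  -- the epigraph of the value function on `p`, up to boundary points
  let A : Set (p × ℝ) := {q | ∃ x, F (x, (q.1 : E)) ≤ q.2}
  have hA : Convex ℝ A := by
    rintro ⟨u, s⟩ ⟨x, hx⟩ ⟨w, t⟩ ⟨y, hy⟩ a b ha hb hab
    exact ⟨a • x + b • y, hF.le_of_le hx hy ha hb hab⟩
  have hsub : Metric.ball (0 : p) ε ×ˢ Set.Ioi c ⊆ A := by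
    rintro ⟨u, t⟩ ⟨hu, ht⟩
    obtain ⟨⟨x, _⟩, ⟨hq, -⟩, rfl⟩ := hball hu
    exact ⟨x, hq.trans (by exact_mod_cast (Set.mem_Ioi.1 ht).le)⟩
  have hsubi : Metric.ball (0 : p) ε ×ˢ Set.Ioi c ⊆ interior A :=
    interior_maximal hsub (Metric.isOpen_ball.prod isOpen_Ioi)
  have hAm : ∀ t : ℝ, ((0 : p), t) ∈ A → m ≤ t := by
    rintro t ⟨x, hx⟩
    exact_mod_cast (hm x).trans hx
  have hnot : ((0 : p), m) ∉ interior A := by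
    intro hmem
    have hcont : Continuous fun t : ℝ => ((0 : p), t) := by fun_prop
    have := hcont.continuousAt.preimage_mem_nhds (mem_interior_iff_mem_nhds.1 hmem)
    obtain ⟨η, hη, hb⟩ := Metric.mem_nhds_iff.1 this
    have h1 := hAm (m - η / 2) (hb (by
      rw [Metric.mem_ball, Real.dist_eq]
      rw [show m - η / 2 - m = -(η / 2) by ring, abs_neg, abs_of_pos (by positivity)]
      linarith))
    linarith
  have hmc : ∃ t₀ : ℝ, m < t₀ ∧ c < t₀ := ⟨max m c + 1, by
    constructor <;> linarith [le_max_left m c, le_max_right m c]⟩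
  obtain ⟨t₀, hmt, hct⟩ := hmc
  have hti : ((0 : p), t₀) ∈ interior A := hsubi ⟨Metric.mem_ball_self hε, hct⟩
  obtain ⟨f, hf⟩ := geometric_hahn_banach_open_point hA.interior isOpen_interior hnot
  have hfle : ∀ q ∈ A, f q ≤ f (0, m) := by
    intro q hq
    have h1 : q ∈ closure (interior A) := by
      rw [hA.closure_interior_eq_closure_of_nonempty_interior ⟨_, hti⟩]
      exact subset_closure hq
    have hcl : IsClosed {q | f q ≤ f (0, m)} := isClosed_le f.continuous continuous_const
    exact closure_minimal (fun a ha => (hf a ha).le) hcl h1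
  have hsplit : ∀ (u : p) (t : ℝ), f (u, t) = f (u, 0) + t * f (0, 1) := by
    intro u t
    rw [← smul_eq_mul, ← map_smul, ← map_add]
    simp
  set σ : ℝ := f (0, 1)
  have hσ : σ < 0 := by
    have h1 := hf _ hti
    rw [hsplit, hsplit 0 m] at h1
    nlinarith
  let g : p →L[ℝ] ℝ := (-σ)⁻¹ • f.comp (ContinuousLinearMap.inl ℝ p ℝ)
  obtain ⟨lam, hlam, -⟩ := exists_extension_norm_eq p g
  refine ⟨lam, fun x u => ?_⟩
  by_cases htop : F (x, u) = ⊤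
  · rw [htop]; exact le_top
  have hup := hdom x u htop
  obtain ⟨t, ht⟩ : ∃ t : ℝ, F (x, u) = t := ⟨_, (EReal.coe_toReal htop (hbot _)).symm⟩
  have h1 := hfle (⟨u, hup⟩, t) ⟨x, ht.le⟩
  rw [hsplit, hsplit 0 m] at h1
  have h2 : f ((0 : p), (0 : ℝ)) = 0 := map_zero f
  have h3 : lam u = (-σ)⁻¹ * f (⟨u, hup⟩, 0) := by
    rw [hlam ⟨u, hup⟩]; simp [g]
  rw [ht, h3]
  norm_cast
  have hσ' : 0 < -σ := by linarith
  rw [inv_mul_eq_div, ← le_sub_iff_add_le', div_le_iff₀ hσ']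
  linarith

end Duality

/-! ### Extended real sums, convexity and lower semicontinuity -/

section EReal

variable {ι : Type*}

lemma ereal_coe_sum (s : Finset ι) (f : ι → ℝ) :
    ((∑ i ∈ s, f i : ℝ) : EReal) = ∑ i ∈ s, (f i : EReal) := by
  classical
  induction s using Finset.induction_on with
  | empty => simp
  | insert a s ha ih => rw [Finset.sum_insert ha, Finset.sum_insert ha, EReal.coe_add, ih]

lemma ereal_sum_ne_bot (s : Finset ι) {f : ι → EReal} (hf : ∀ i, f i ≠ ⊥) :
    ∑ i ∈ s, f i ≠ ⊥ := by
  classical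
  induction s using Finset.induction_on with
  | empty => simp
  | insert a s ha ih => rw [Finset.sum_insert ha]; exact EReal.add_ne_bot_iff.2 ⟨hf a, ih⟩

lemma ereal_sum_eq_bot [Fintype ι] {f : ι → EReal} {i : ι} (hi : f i = ⊥) : ∑ j, f j = ⊥ := by
  classical
  rw [← Finset.add_sum_erase _ _ (Finset.mem_univ i), hi, EReal.bot_add]

lemma ereal_ne_top_of_sum_add_ne_top [Fintype ι] {f : ι → EReal} {b : EReal}
    (hf : ∀ i, f i ≠ ⊥) (hb : b ≠ ⊥) (h : ∑ i, f i + b ≠ ⊤) : (∀ i, f i ≠ ⊤) ∧ b ≠ ⊤ := by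
  classical
  have h1 := (EReal.add_ne_top_iff_ne_top₂ (ereal_sum_ne_bot _ hf) hb).1 h
  refine ⟨fun i => ?_, h1.2⟩
  have h2 := h1.1
  rw [← Finset.add_sum_erase _ _ (Finset.mem_univ i)] at h2
  exact ((EReal.add_ne_top_iff_ne_top₂ (hf i) (ereal_sum_ne_bot _ hf)).1 h2).1

lemma ereal_iSup_add_le {α : Type*} {f : α → EReal} {b M : EReal} (h : ∀ x, f x + b ≤ M) :
    (⨆ x, f x) + b ≤ M := by
  refine EReal.add_le_of_forall_lt fun a' ha b' hb => ?_
  obtain ⟨x, hx⟩ := lt_iSup_iff.1 ha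
  exact (add_le_add hx.le hb.le).trans (h x)

/-- A sum of suprema over independent variables is bounded by any joint upper bound. -/
lemma ereal_sum_iSup_add_le {α : ι → Type*} (s : Finset ι) (f : ∀ i, α i → EReal) {M : EReal} :
    ∀ b : EReal, (∀ x : ∀ i, α i, ∑ i ∈ s, f i (x i) + b ≤ M) →
      (∀ i, Nonempty (α i)) → ∑ i ∈ s, (⨆ x, f i x) + b ≤ M := by
  classical
  induction s using Finset.induction_on with
  | empty =>
    intro b h hne
    simpa using h fun i => (hne i).some
  | insert a s ha ih =>
    intro b h hne
    rw [Finset.sum_insert ha, add_assoc]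
    refine ereal_iSup_add_le fun y => ?_
    rw [add_left_comm]
    refine ih _ (fun x => ?_) hne
    have h1 := h (Function.update x a y)
    rw [Finset.sum_insert ha, Function.update_self] at h1
    have h2 : ∑ i ∈ s, f i (Function.update x a y i) = ∑ i ∈ s, f i (x i) :=
      Finset.sum_congr rfl fun i hi => by
        rw [Function.update_of_ne (ne_of_mem_of_not_mem hi ha)]
    rwa [h2, add_assoc, add_left_comm] at h1

end EReal

section Calculus

lemma EConvexOn.add {V : Type*} [AddCommGroup V] [Module ℝ V] {F₁ F₂ : V → EReal}
    (h₁ : EConvexOn F₁) (h₂ : EConvexOn F₂) : EConvexOn fun v => F₁ v + F₂ v := by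
  intro x y a b ha hb hab
  refine (add_le_add (h₁ x y a b ha hb hab) (h₂ x y a b ha hb hab)).trans (le_of_eq ?_)
  rw [EReal.left_distrib_of_nonneg_of_ne_top (by exact_mod_cast ha) (EReal.coe_ne_top a),
    EReal.left_distrib_of_nonneg_of_ne_top (by exact_mod_cast hb) (EReal.coe_ne_top b),
    add_add_add_comm]

lemma EConvexOn.comp_linearMap {V W : Type*} [AddCommGroup V] [Module ℝ V] [AddCommGroup W]
    [Module ℝ W] {F : W → EReal} (h : EConvexOn F) (L : V →ₗ[ℝ] W) :
    EConvexOn fun v => F (L v) := by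
  intro x y a b ha hb hab
  simpa using h (L x) (L y) a b ha hb hab

lemma EConvexOn.sum {ι V : Type*} [AddCommGroup V] [Module ℝ V] (s : Finset ι)
    {F : ι → V → EReal} (h : ∀ i, EConvexOn (F i)) : EConvexOn fun v => ∑ i ∈ s, F i v := by
  classical
  induction s using Finset.induction_on with
  | empty => intro x y a b _ _ _; simp
  | insert a s ha ih =>
    simp_rw [Finset.sum_insert ha]
    exact (h a).add ih

lemma lsc_add_of_ne_bot {V : Type*} [TopologicalSpace V] {F₁ F₂ : V → EReal}
    (h₁ : LowerSemicontinuous F₁) (h₂ : LowerSemicontinuous F₂) (hb₁ : ∀ v, F₁ v ≠ ⊥)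
    (hb₂ : ∀ v, F₂ v ≠ ⊥) : LowerSemicontinuous fun v => F₁ v + F₂ v :=
  h₁.add' h₂ fun v => EReal.continuousAt_add (Or.inr (hb₂ v)) (Or.inl (hb₁ v))

lemma lsc_sum_of_ne_bot {ι V : Type*} [TopologicalSpace V] (s : Finset ι) {F : ι → V → EReal}
    (h : ∀ i, LowerSemicontinuous (F i)) (hb : ∀ i v, F i v ≠ ⊥) :
    LowerSemicontinuous fun v => ∑ i ∈ s, F i v := by
  classical
  induction s using Finset.induction_on with
  | empty => simpa using lowerSemicontinuous_const
  | insert a s ha ih =>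
    simp_rw [Finset.sum_insert ha]
    exact lsc_add_of_ne_bot (h a) ih (hb a) fun v => ereal_sum_ne_bot s fun i => hb i v

end Calculus

/-! ### Fenchel–Rockafellar duality -/

noncomputable section FenchelRockafellar

variable {ι : Type*} [Fintype ι] {X : ι → Type*} [∀ i, NormedAddCommGroup (X i)]
  [∀ i, NormedSpace ℝ (X i)] {C : Type*} [NormedAddCommGroup C] [NormedSpace ℝ C]
  (e : ∀ i, X i →L[ℝ] C) (G : ∀ i, X i → EReal) (H : C → EReal)

/-- The jointly convex perturbation `(x, u) ↦ ∑ G_i(x_i) + H(u - ∑ e_i x_i)`, whose partial infimum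
over `x` is the value function. -/
def perturb (q : (∀ i, X i) × C) : EReal := ∑ i, G i (q.1 i) + H (q.2 - ∑ i, e i (q.1 i))

/-- The dual objective `λ ↦ ∑ G_i*(λ ∘ e_i) + H*(λ)`. -/
def dualObj (lam : C →L[ℝ] ℝ) : EReal :=
  ∑ i, (⨆ x : X i, (((lam (e i x) : ℝ) : EReal) - G i x)) +
    ⨆ u : C, (((lam u : ℝ) : EReal) - H u)

/-- The conditions `λ ∘ e_i ∈ ∂G_i(x_i)` for all `i` and `λ ∈ ∂H(-∑ e_i x_i)`. -/
def KKT (x : ∀ i, X i) (lam : C →L[ℝ] ℝ) : Prop :=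
  (∀ i, ∀ y : X i, G i (x i) + ((lam (e i (y - x i)) : ℝ) : EReal) ≤ G i y) ∧
    ∀ w : C, H (-(∑ i, e i (x i))) + ((lam (w - -(∑ i, e i (x i))) : ℝ) : EReal) ≤ H w

/-- `m + λ` is an affine minorant of the value function. -/
def Minorizes (m : ℝ) (lam : C →L[ℝ] ℝ) : Prop :=
  ∀ (x : ∀ i, X i) (w : C),
    (m : EReal) + ((lam (w + ∑ i, e i (x i)) : ℝ) : EReal) ≤ ∑ i, G i (x i) + H w

variable {e G H}

lemma exists_real_of_sum_ne_top (hG : ∀ i x, G i x ≠ ⊥) (hH : ∀ u, H u ≠ ⊥)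
    {x : ∀ i, X i} {w : C} (h : ∑ i, G i (x i) + H w ≠ ⊤) :
    ∃ (g : ι → ℝ) (η : ℝ), (∀ i, G i (x i) = g i) ∧ H w = η := by
  obtain ⟨h1, h2⟩ := ereal_ne_top_of_sum_add_ne_top (fun i => hG i (x i)) (hH w) h
  exact ⟨fun i => (G i (x i)).toReal, (H w).toReal,
    fun i => (EReal.coe_toReal (h1 i) (hG i _)).symm, (EReal.coe_toReal h2 (hH w)).symm⟩

lemma dualObj_le_of_minorizes {m : ℝ} {lam : C →L[ℝ] ℝ} (hG : ∀ i x, G i x ≠ ⊥)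
    (hH : ∀ u, H u ≠ ⊥) (h : Minorizes e G H m lam) : dualObj e G H lam ≤ ((-m : ℝ) : EReal) := by
  refine ereal_sum_iSup_add_le _ (fun i x => ((lam (e i x) : ℝ) : EReal) - G i x) _
    (fun x => ?_) (fun i => ⟨0⟩)
  rw [add_comm]
  refine ereal_iSup_add_le fun w => ?_
  rw [add_comm]
  by_cases h1 : ∑ i, G i (x i) + H w = ⊤
  · have hbot : ∑ i, (((lam (e i (x i)) : ℝ) : EReal) - G i (x i)) = ⊥ ∨ H w = ⊤ := by
      by_cases hi : ∃ i, G i (x i) = ⊤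
      · obtain ⟨i, hi⟩ := hi
        exact Or.inl (ereal_sum_eq_bot (i := i) (by rw [hi]; rfl))
      · push Not at hi
        refine Or.inr ?_
        by_contra hw
        choose g hg using fun i => (⟨_, (EReal.coe_toReal (hi i) (hG i _)).symm⟩ :
          ∃ g : ℝ, G i (x i) = g)
        simp_rw [hg, ← ereal_coe_sum] at h1
        exact EReal.add_ne_top (EReal.coe_ne_top _) hw h1
    rcases hbot with hb | hb
    · rw [hb, EReal.bot_add]; exact bot_le
    · rw [hb, EReal.sub_top, EReal.add_bot]; exact bot_le
  · obtain ⟨g, η, hg, hη⟩ := exists_real_of_sum_ne_top hG hH h1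
    have h2 := h x w
    simp_rw [hg, hη, ← EReal.coe_sub, ← ereal_coe_sum] at h2 ⊢
    norm_cast at h2 ⊢
    rw [map_add, map_sum] at h2
    rw [Finset.sum_sub_distrib]
    linarith

lemma neg_le_dualObj (hG : ∀ i x, G i x ≠ ⊥) (hH : ∀ u, H u ≠ ⊥) (x : ∀ i, X i)
    (lam : C →L[ℝ] ℝ) :
    -(∑ i, G i (x i) + H (-(∑ i, e i (x i)))) ≤ dualObj e G H lam := by
  by_cases h1 : ∑ i, G i (x i) + H (-(∑ i, e i (x i))) = ⊤
  · rw [h1, EReal.neg_top]; exact bot_le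
  · obtain ⟨g, η, hg, hη⟩ := exists_real_of_sum_ne_top hG hH h1
    have h2 : ∑ i, (((lam (e i (x i)) : ℝ) : EReal) - G i (x i)) +
        (((lam (-(∑ i, e i (x i))) : ℝ) : EReal) - H (-(∑ i, e i (x i)))) ≤
        dualObj e G H lam :=
      add_le_add (Finset.sum_le_sum fun i _ =>
        le_iSup (fun z : X i => ((lam (e i z) : ℝ) : EReal) - G i z) (x i))
        (le_iSup (fun u : C => ((lam u : ℝ) : EReal) - H u) _)
    refine le_trans (le_of_eq ?_) h2
    simp_rw [hg, hη, ← EReal.coe_sub, ← ereal_coe_sum]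
    norm_cast
    rw [map_neg, map_sum, Finset.sum_sub_distrib]
    ring

/-- At a minimizer, an affine minorant of the value function that is exact at `0` is a
multiplier: vary one variable at a time. -/
lemma kkt_of_minorizes (hG : ∀ i x, G i x ≠ ⊥) (hH : ∀ u, H u ≠ ⊥) {x : ∀ i, X i} {m : ℝ}
    {lam : C →L[ℝ] ℝ} (h : Minorizes e G H m lam)
    (hx : ∑ i, G i (x i) + H (-(∑ i, e i (x i))) = m) : KKT e G H x lam := by
  classical
  have htop : ∑ i, G i (x i) + H (-(∑ i, e i (x i))) ≠ ⊤ := by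
    rw [hx]; exact EReal.coe_ne_top m
  obtain ⟨g, η, hg, hη⟩ := exists_real_of_sum_ne_top hG hH htop
  have hm : ∑ i, g i + η = m := by
    simp_rw [hg, hη, ← ereal_coe_sum] at hx
    exact_mod_cast hx
  refine ⟨fun i y => ?_, fun w => ?_⟩
  · by_cases hy : G i y = ⊤
    · rw [hy]; exact le_top
    obtain ⟨γ, hγ⟩ : ∃ γ : ℝ, G i y = γ := ⟨_, (EReal.coe_toReal hy (hG i y)).symm⟩
    have h1 := h (Function.update x i y) (-(∑ i, e i (x i)))
    rw [← Finset.add_sum_erase _ (fun j => G j (Function.update x i y j)) (Finset.mem_univ i),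
      ← Finset.add_sum_erase _ (fun j => e j (Function.update x i y j)) (Finset.mem_univ i),
      Function.update_self,
      Finset.sum_congr rfl (f := fun j => G j (Function.update x i y j))
        (g := fun j => G j (x j)) (fun j hj => by
        rw [Function.update_of_ne (Finset.ne_of_mem_erase hj)]),
      Finset.sum_congr rfl (f := fun j => e j (Function.update x i y j))
        (g := fun j => e j (x j)) (fun j hj => by
        rw [Function.update_of_ne (Finset.ne_of_mem_erase hj)])] at h1
    have h2 : -(∑ i, e i (x i)) + (e i y + ∑ j ∈ Finset.univ.erase i, e j (x j))
        = e i (y - x i) := by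
      rw [← Finset.add_sum_erase _ (fun j => e j (x j)) (Finset.mem_univ i), map_sub]
      abel
    rw [h2] at h1
    simp_rw [hη, hγ, hg, ← ereal_coe_sum] at h1 ⊢
    norm_cast at h1 ⊢
    have h3 := Finset.add_sum_erase _ g (Finset.mem_univ i)
    linarith
  · by_cases hw : H w = ⊤
    · rw [hw]; exact le_top
    obtain ⟨γ, hγ⟩ : ∃ γ : ℝ, H w = γ := ⟨_, (EReal.coe_toReal hw (hH w)).symm⟩
    have h1 := h x w
    rw [sub_neg_eq_add]
    simp_rw [hη, hγ, hg, ← ereal_coe_sum] at h1 ⊢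
    norm_cast at h1 ⊢
    linarith

/-- Conversely, adding up the subgradient inequalities yields an affine minorant of the value
function whose value at `0` is the primal objective. -/
lemma minorizes_of_kkt (hG : ∀ i x, G i x ≠ ⊥) (hH : ∀ u, H u ≠ ⊥) (hGt : ∀ i, ∃ x, G i x ≠ ⊤)
    (hHt : ∃ u, H u ≠ ⊤) {x : ∀ i, X i} {lam : C →L[ℝ] ℝ} (h : KKT e G H x lam) :
    ∃ m : ℝ, ∑ i, G i (x i) + H (-(∑ i, e i (x i))) = m ∧ Minorizes e G H m lam := by
  have hfin : ∀ i, G i (x i) ≠ ⊤ := by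
    intro i hi
    obtain ⟨y, hy⟩ := hGt i
    have := h.1 i y
    rw [hi, EReal.top_add_coe, top_le_iff] at this
    exact hy this
  have hfinH : H (-(∑ i, e i (x i))) ≠ ⊤ := by
    intro hi
    obtain ⟨y, hy⟩ := hHt
    have := h.2 y
    rw [hi, EReal.top_add_coe, top_le_iff] at this
    exact hy this
  choose g hg using fun i => (⟨_, (EReal.coe_toReal (hfin i) (hG i _)).symm⟩ :
    ∃ g : ℝ, G i (x i) = g)
  obtain ⟨η, hη⟩ : ∃ η : ℝ, H (-(∑ i, e i (x i))) = η :=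
    ⟨_, (EReal.coe_toReal hfinH (hH _)).symm⟩
  refine ⟨∑ i, g i + η, ?_, fun y w => ?_⟩
  · simp_rw [hg, hη, ← ereal_coe_sum]
    norm_cast
  · by_cases htop : ∑ i, G i (y i) + H w = ⊤
    · rw [htop]; exact le_top
    obtain ⟨g', η', hg', hη'⟩ := exists_real_of_sum_ne_top hG hH htop
    have h1 : ∀ i, g i + lam (e i (y i - x i)) ≤ g' i := by
      intro i
      have := h.1 i (y i)
      rw [hg, hg'] at this
      exact_mod_cast this
    have h2 : η + lam (w - -(∑ i, e i (x i))) ≤ η' := by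
      have := h.2 w
      rw [hη, hη'] at this
      exact_mod_cast this
    have h3 := Finset.sum_le_sum fun i (_ : i ∈ Finset.univ) => h1 i
    simp_rw [hg', hη', ← ereal_coe_sum]
    norm_cast
    simp only [map_sub, Finset.sum_add_distrib, Finset.sum_sub_distrib, map_add, map_neg,
      map_sum] at h2 h3 ⊢
    linarith

/-- Fenchel–Rockafellar duality for `inf_x ∑ G_i(x_i) + H(-∑ e_i x_i)` in Banach spaces, when the
cone generated by the domain of the value function is a closed subspace `p`. -/
theorem fenchel_duality [∀ i, CompleteSpace (X i)] [CompleteSpace C]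
    (hGconv : ∀ i, EConvexOn (G i)) (hGproper : ∀ i, EProper (G i))
    (hGlsc : ∀ i, LowerSemicontinuous (G i))
    (hHconv : EConvexOn H) (hHproper : EProper H) (hHlsc : LowerSemicontinuous H)
    (p : Submodule ℝ C) (hpc : IsClosed (p : Set C))
    (hdom : ∀ x u, perturb e G H (x, u) ≠ ⊤ → u ∈ p)
    (habs : ∀ u ∈ p, ∃ s : ℝ, 0 < s ∧ ∃ x, perturb e G H (x, s • u) ≠ ⊤)
    (objP : (∀ i, X i) → EReal)
    (hobjP : objP = fun x => ∑ i, G i (x i) + H (-(∑ i, e i (x i)))) :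
    (∃ lam, dualObj e G H lam = ⨅ lam', dualObj e G H lam') ∧
    (⨅ lam, dualObj e G H lam) = -(⨅ x, objP x) ∧
    (∀ x, (objP x = ⨅ x', objP x') ↔ ∃ lam, KKT e G H x lam) ∧
    ∀ x lam, KKT e G H x lam → dualObj e G H lam = ⨅ lam', dualObj e G H lam' := by
  have hG : ∀ i x, G i x ≠ ⊥ := fun i => (hGproper i).2
  have hH : ∀ u, H u ≠ ⊥ := hHproper.2
  have hPbot : ∀ x, objP x ≠ ⊥ := fun x => by
    rw [hobjP]
    exact EReal.add_ne_bot_iff.2 ⟨ereal_sum_ne_bot _ fun i => hG i _, hH _⟩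
  have hweak : ∀ lam, -(⨅ x, objP x) ≤ dualObj e G H lam := fun lam => by
    rw [EReal.neg_le]
    refine le_iInf fun x => ?_
    rw [EReal.neg_le, hobjP]
    exact neg_le_dualObj hG hH x lam
  have hF : ∀ x, perturb e G H (x, 0) = objP x := fun x => by
    simp [perturb, hobjP]
  have hPtop : (⨅ x, objP x) ≠ ⊤ := by
    obtain ⟨s, -, x, hx⟩ := habs 0 p.zero_mem
    rw [smul_zero, hF] at hx
    exact fun h => hx (iInf_eq_top.1 h x)
  have hstrong : ∀ m : ℝ, (⨅ x, objP x) = m → ∃ lam, Minorizes e G H m lam := by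
    intro m hm
    let L : ((∀ i, X i) × C) →L[ℝ] C := ContinuousLinearMap.snd ℝ _ _ -
      ∑ i, (e i).comp ((ContinuousLinearMap.proj i).comp (ContinuousLinearMap.fst ℝ _ _))
    have hL : ∀ q, L q = q.2 - ∑ i, e i (q.1 i) := fun q => by simp [L]
    have hFeq : perturb e G H = fun q => ∑ i, G i (q.1 i) + H (L q) := by
      funext q; rw [hL]; rfl
    have hconv : EConvexOn (perturb e G H) := by
      rw [hFeq]
      exact (EConvexOn.sum _ fun i => (hGconv i).comp_linearMap
        ((LinearMap.proj i).comp (LinearMap.fst ℝ _ _))).add (hHconv.comp_linearMap L.toLinearMap)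
    have hlsc : LowerSemicontinuous (perturb e G H) := by
      rw [hFeq]
      refine lsc_add_of_ne_bot (lsc_sum_of_ne_bot _ (fun i => ?_) fun i q => hG i _) ?_
        (fun q => ereal_sum_ne_bot _ fun i => hG i _) fun q => hH _
      · have hc : Continuous fun q : (∀ i, X i) × C => q.1 i := by fun_prop
        exact (hGlsc i).comp hc
      · exact hHlsc.comp L.continuous
    obtain ⟨lam, hlam⟩ := exists_subgradient hconv hlsc
      (fun q => EReal.add_ne_bot_iff.2 ⟨ereal_sum_ne_bot _ fun i => hG i _, hH _⟩)
      p hpc hdom habs m (fun x => by rw [hF, ← hm]; exact iInf_le _ x)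
    refine ⟨lam, fun x w => (hlam x _).trans (le_of_eq ?_)⟩
    simp [perturb]
  have hexact : ∀ (m : ℝ) lam, (⨅ x, objP x) = m → Minorizes e G H m lam →
      dualObj e G H lam = -(⨅ x, objP x) := fun m lam hm h =>
    le_antisymm (by rw [hm, ← EReal.coe_neg]; exact dualObj_le_of_minorizes hG hH h) (hweak lam)
  have hmain : ∃ lam, dualObj e G H lam = -(⨅ x, objP x) := by
    by_cases hb : (⨅ x, objP x) = ⊥
    · refine ⟨0, le_antisymm ?_ (hweak 0)⟩
      rw [hb, EReal.neg_bot]; exact le_top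
    · have hm := (EReal.coe_toReal hPtop hb).symm
      obtain ⟨lam, hlam⟩ := hstrong _ hm
      exact ⟨lam, hexact _ lam hm hlam⟩
  have hval : (⨅ lam, dualObj e G H lam) = -(⨅ x, objP x) := by
    obtain ⟨lam, hlam⟩ := hmain
    exact le_antisymm (hlam ▸ iInf_le _ lam) (le_iInf hweak)
  have hopt : ∀ x lam, KKT e G H x lam → ∃ m : ℝ, objP x = m ∧ (⨅ x, objP x) = m ∧
      Minorizes e G H m lam := by
    intro x lam h
    obtain ⟨m, hm, hmin⟩ := minorizes_of_kkt hG hH (fun i => (hGproper i).1) hHproper.1 h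
    have hxm : objP x = m := by rw [hobjP]; exact hm
    refine ⟨m, hxm, le_antisymm (hxm ▸ iInf_le _ x) (le_iInf fun y => ?_), hmin⟩
    simpa [hobjP] using hmin y (-(∑ i, e i (y i)))
  refine ⟨?_, hval, fun x => ⟨fun hx => ?_, ?_⟩, fun x lam h => ?_⟩
  · obtain ⟨lam, hlam⟩ := hmain
    exact ⟨lam, hlam.trans hval.symm⟩
  · have hm := (EReal.coe_toReal hPtop (hx ▸ hPbot x)).symm
    obtain ⟨lam, hlam⟩ := hstrong _ hm
    refine ⟨lam, kkt_of_minorizes hG hH hlam ?_⟩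
    rw [← hm, ← hx, hobjP]
  · rintro ⟨lam, h⟩
    obtain ⟨m, h1, h2, -⟩ := hopt x lam h
    rw [h1, h2]
  · obtain ⟨m, -, h2, h3⟩ := hopt x lam h
    rw [hval]
    exact hexact m lam h2 h3

end FenchelRockafellar

/-! ### The weighted spaces -/

section Embedding

open BoundedContinuousFunction

variable {T d : ℕ} {S : Fin (T + 1) → Type*} [∀ t, TopologicalSpace (S t)]

/-- The embedding `x_t ↦ x_t ∘ π_t` of `C_t` into `C` as a bounded linear map. -/
noncomputable def embedL (ψt : ∀ t, S t → ℝ) (hψc : ∀ t, Continuous (ψt t))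
    (hψ1 : ∀ t st, 1 ≤ ψt t st) (t : Fin (T + 1)) :
    (S t →ᵇ (Fin d → ℝ)) →L[ℝ] ((∀ r, S r) →ᵇ (Fin d → ℝ)) :=
  LinearMap.mkContinuous
    { toFun := embedT ψt hψc hψ1 t
      map_add' := fun x y => by
        ext s
        simp [embedT]
      map_smul' := fun c x => by
        ext s
        simp [embedT, mul_left_comm] }
    1 (fun x => by
      rw [one_mul]
      refine (norm_le (norm_nonneg x)).2 fun s => ?_
      change ‖(ψt t (s t) / psiS ψt s) • x (s t)‖ ≤ ‖x‖
      have h0 : ∀ r, 0 ≤ ψt r (s r) := fun r => zero_le_one.trans (hψ1 r (s r))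
      have hpos := psiS_pos ψt hψ1 s
      have hle : ψt t (s t) / psiS ψt s ≤ 1 := by
        rw [div_le_one hpos]
        exact Finset.single_le_sum (f := fun r => ψt r (s r)) (fun r _ => h0 r)
          (Finset.mem_univ t)
      rw [norm_smul, Real.norm_of_nonneg (div_nonneg (h0 t) hpos.le)]
      exact (mul_le_of_le_one_left (norm_nonneg _) hle).trans (x.norm_coe_le_norm _))

end Embedding

noncomputable section

open MeasureTheory Filter Set BoundedContinuousFunction
open scoped ENNReal

/-- **Theorem (conjugate duality for problem (P)).**
Let `G_t` and `H` be proper lsc convex functions on the weighted spaces `C_t` and `C`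
(elements represented by the bounded continuous functions `x/ψ_t`, `u/ψ`) such that
`⋃_{α>0} α · dom φ` is a nonempty closed linear subspace of `C`, where `φ` is the value
function of problem (P).  Then the infimum of `∑_t G_t*(λ_t) + H*(λ)` over `λ ∈ C*` is
attained, its value equals `−inf (P)`, and `x` solves (P) iff there is a `λ ∈ C*` with
`λ_t ∈ ∂G_t(x_t)` for all `t` and `λ ∈ ∂H(−∑_t x_t∘π_t)`; any such `λ` solves the
relaxed dual problem. -/
theorem stmt1
    {T d : ℕ} (S : Fin (T + 1) → Type*)
    [∀ t, TopologicalSpace (S t)] [∀ t, PolishSpace (S t)]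
    [∀ t, MeasurableSpace (S t)] [∀ t, BorelSpace (S t)]
    (ψt : ∀ t, S t → ℝ) (hψc : ∀ t, Continuous (ψt t)) (hψ1 : ∀ t st, 1 ≤ ψt t st)
    -- the proper lsc convex functions `G_t` and `H`
    (G : ∀ t, (S t →ᵇ (Fin d → ℝ)) → EReal)
    (hGconv : ∀ t, EConvexOn (G t)) (hGproper : ∀ t, EProper (G t))
    (hGlsc : ∀ t, LowerSemicontinuous (G t))
    (H : ((∀ t, S t) →ᵇ (Fin d → ℝ)) → EReal)
    (hHconv : EConvexOn H) (hHproper : EProper H) (hHlsc : LowerSemicontinuous H)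
    -- the value function `φ` of problem (P) and the objectives of (P) and of the
    -- relaxed dual problem (DR); `G_t*(λ_t)` is expressed via the embedding `C_t → C`
    (φ : ((∀ t, S t) →ᵇ (Fin d → ℝ)) → EReal)
    (hφ : φ = fun u => ⨅ x : ∀ t, S t →ᵇ (Fin d → ℝ),
      ((∑ t, G t (x t)) + H (u - ∑ t, embedT ψt hψc hψ1 t (x t))))
    (objP : (∀ t, S t →ᵇ (Fin d → ℝ)) → EReal)
    (hobjP : objP = fun x =>
      (∑ t, G t (x t)) + H (-(∑ t, embedT ψt hψc hψ1 t (x t))))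
    (objDR : WeakDual ℝ ((∀ t, S t) →ᵇ (Fin d → ℝ)) → EReal)
    (hobjDR : objDR = fun lam =>
      (∑ t, ⨆ x : S t →ᵇ (Fin d → ℝ),
        (((lam (embedT ψt hψc hψ1 t x) : ℝ) : EReal) - G t x)) +
      (⨆ u : (∀ t, S t) →ᵇ (Fin d → ℝ), (((lam u : ℝ) : EReal) - H u)))
    -- `⋃_{α>0} α · dom φ` is a nonempty closed linear subspace of `C`
    (U : Set ((∀ t, S t) →ᵇ (Fin d → ℝ)))
    (hU : U = {u | ∃ α : ℝ, 0 < α ∧ ∃ v, φ v ≠ ⊤ ∧ u = α • v})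
    (hUne : U.Nonempty) (hUclosed : IsClosed U)
    (hUsub : ∃ p : Submodule ℝ ((∀ t, S t) →ᵇ (Fin d → ℝ)), ↑p = U) :
    -- the optimum in (DR) is attained
    (∃ lam, objDR lam = ⨅ lam', objDR lam') ∧
    -- there is no duality gap
    (⨅ lam, objDR lam) = -(⨅ x : ∀ t, S t →ᵇ (Fin d → ℝ), objP x) ∧
    -- `x` solves (P) iff the subdifferential conditions hold for some `λ ∈ C*`
    (∀ x : ∀ t, S t →ᵇ (Fin d → ℝ),
      (objP x = ⨅ x', objP x') ↔
        ∃ lam : WeakDual ℝ ((∀ t, S t) →ᵇ (Fin d → ℝ)),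
          (∀ t, ∀ y : S t →ᵇ (Fin d → ℝ),
            G t (x t) + ((lam (embedT ψt hψc hψ1 t (y - x t)) : ℝ) : EReal) ≤ G t y) ∧
          (∀ w : (∀ t, S t) →ᵇ (Fin d → ℝ),
            H (-(∑ t, embedT ψt hψc hψ1 t (x t))) +
              ((lam (w - -(∑ t, embedT ψt hψc hψ1 t (x t))) : ℝ) : EReal) ≤ H w)) ∧
    -- and any such `λ` solves (DR)
    (∀ x : ∀ t, S t →ᵇ (Fin d → ℝ),
      ∀ lam : WeakDual ℝ ((∀ t, S t) →ᵇ (Fin d → ℝ)),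
        ((∀ t, ∀ y : S t →ᵇ (Fin d → ℝ),
            G t (x t) + ((lam (embedT ψt hψc hψ1 t (y - x t)) : ℝ) : EReal) ≤ G t y) ∧
         (∀ w : (∀ t, S t) →ᵇ (Fin d → ℝ),
            H (-(∑ t, embedT ψt hψc hψ1 t (x t))) +
              ((lam (w - -(∑ t, embedT ψt hψc hψ1 t (x t))) : ℝ) : EReal) ≤ H w)) →
        objDR lam = ⨅ lam', objDR lam') := by
  obtain ⟨p, hp⟩ := hUsub
  let e := embedL (d := d) ψt hψc hψ1
  have hφe : ∀ u, φ u = ⨅ x, perturb e G H (x, u) := fun u => by rw [hφ]; rfl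
  have hmem : ∀ u, u ∈ p ↔ u ∈ U := fun u => by rw [← hp]; rfl
  subst hobjDR
  refine fenchel_duality (e := e) (G := G) (H := H) hGconv hGproper hGlsc hHconv hHproper hHlsc p
    (by rw [hp]; exact hUclosed) (fun x u hx => ?_) (fun u hu => ?_) objP hobjP
  · rw [hmem, hU]
    refine ⟨1, one_pos, u, fun h => hx ?_, (one_smul ℝ u).symm⟩
    rw [hφe] at h
    exact iInf_eq_top.1 h x
  · rw [hmem, hU] at hu
    obtain ⟨α, hα, v, hv, rfl⟩ := hu
    refine ⟨α⁻¹, inv_pos.2 hα, ?_⟩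
    rw [inv_smul_smul₀ hα.ne']
    by_contra! hcon
    exact hv (by rw [hφe]; exact iInf_eq_top.2 hcon)

end
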